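/- Assume α ≥ 1, λ is nondecreasing on [t₀,∞), b(t) > β'(t) + β(t)/t (equivalently w(t) > 0) for every t ≥ t₀, (α−3)·w(t) − t·w'(t) ≥ 0 for every t ≥ t₀, and β(t)/(t·w(t)) → 0 as t → +∞. Then t·β(t)·(Φ_{λ(t)}(x(t)) − Φ*) → 0 as t → +∞. -/

import Mathlib

open Set MeasureTheory Filter Real

noncomputable section

/-- Convexity for extended-real-valued functions. -/
def EConvexOn {H : Type*} [NormedAddCommGroup H] [NormedSpace ℝ H] (f : H → EReal) : Prop :=
  ∀ x y : H, ∀ a c : ℝ, 0 ≤ a → 0 ≤ c → a + c = 1 →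
    f (a • x + c • y) ≤ (a : EReal) * f x + (c : EReal) * f y

/-- `p` is the proximal point of `f` with parameter `l` at `x`, i.e. the (unique) minimizer of
`y ↦ f y + ‖x - y‖² / (2l)`. -/
def IsProxPt {H : Type*} [NormedAddCommGroup H] [InnerProductSpace ℝ H]
    (f : H → EReal) (l : ℝ) (x p : H) : Prop :=
  ∀ y : H, f p + ((‖x - p‖ ^ 2 / (2 * l) : ℝ) : EReal)
      ≤ f y + ((‖x - y‖ ^ 2 / (2 * l) : ℝ) : EReal)

/-- The Moreau envelope of `f` with parameter `l` (as a real number). -/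
def moreau {H : Type*} [NormedAddCommGroup H] [InnerProductSpace ℝ H]
    (f : H → EReal) (l : ℝ) (x : H) : ℝ :=
  (⨅ y : H, f y + ((‖x - y‖ ^ 2 / (2 * l) : ℝ) : EReal)).toReal

/-!
Convexity makes `G t = (x t - p t) / λ t` a subgradient of `Φ` at the proximal point `p t`. Hence
the Moreau envelope lies between an affine minorant and a quadratic majorant that touch at time `t`
with the same derivative, so along the trajectory its derivative is `⟪G, ẋ⟫ - λ' / 2 * ‖G‖ ^ 2`.
With `w = b - β' - β / t`, the equation says that `u = (α - 1) (x - z) + t (ẋ + β G)` satisfies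
`u' = -t w G`, and therefore the energy `t² w (Φ_λ(x) - Φ*) + ‖u‖² / 2` is nonincreasing. In
particular `t² w (Φ_λ(x) - Φ*)` is bounded, and multiplying by `β / (t w) → 0` gives the claim.
-/

section

open scoped Topology RealInnerProductSpace

theorem hasFDerivAt_of_eventually_le_of_eventually_le
    {E : Type*} [NormedAddCommGroup E] [NormedSpace ℝ E] {l f u : E → ℝ} {f' : E →L[ℝ] ℝ} {x : E}
    (hl : HasFDerivAt l f' x) (hu : HasFDerivAt u f' x)
    (hlf : ∀ᶠ y in 𝓝 x, l y ≤ f y) (hfu : ∀ᶠ y in 𝓝 x, f y ≤ u y) (hlu : l x = u x) :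
    HasFDerivAt f f' x := by
  have hfx : f x = l x := le_antisymm (hfu.self_of_nhds.trans_eq hlu.symm) hlf.self_of_nhds
  rw [hasFDerivAt_iff_isLittleO] at hl hu ⊢
  refine (Asymptotics.IsBigO.of_bound 1 ?_).trans_isLittleO (hl.norm_left.add hu.norm_left)
  filter_upwards [hlf, hfu] with y hly huy
  rw [one_mul, ← hlu, hfx, Real.norm_of_nonneg (add_nonneg (norm_nonneg _) (norm_nonneg _))]
  calc ‖f y - l x - f' (y - x)‖
      ≤ max ‖l y - l x - f' (y - x)‖ ‖u y - l x - f' (y - x)‖ :=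
        abs_le_max_abs_abs (by linarith) (by linarith)
    _ ≤ _ := max_le_add_of_nonneg (norm_nonneg _) (norm_nonneg _)

variable {H : Type*} [NormedAddCommGroup H] [InnerProductSpace ℝ H]

/-- `g` is a subgradient of the extended-real-valued function `f` at `p`, i.e. `g ∈ ∂f(p)`.
Finiteness of `f p` is not part of the definition. -/
def IsSubgradientAt (f : H → EReal) (g p : H) : Prop :=
  ∀ y : H, f p + ((⟪g, y - p⟫ : ℝ) : EReal) ≤ f y

theorem isSubgradientAt_zero_of_forall_le {f : H → EReal} {z : H} (hz : ∀ y, f z ≤ f y) :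
    IsSubgradientAt f 0 z := by
  simpa [IsSubgradientAt] using hz

namespace IsProxPt

variable {f : H → EReal} {l : ℝ} {x p : H}

theorem ne_top (h : IsProxPt f l x p) {y : H} (hy : f y ≠ ⊤) : f p ≠ ⊤ := by
  intro hp
  have hle := h y
  rw [hp, EReal.top_add_coe, top_le_iff] at hle
  exact (EReal.add_lt_top hy (EReal.coe_ne_top _)).ne hle

theorem ne_bot (h : IsProxPt f l x p) (hp : f p ≠ ⊥) (y : H) : f y ≠ ⊥ := by
  intro hy
  have hle := h y
  rw [hy, EReal.bot_add, le_bot_iff, EReal.add_eq_bot_iff] at hle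
  exact hle.elim hp (EReal.coe_ne_bot _)

theorem add_inner_le_add_mul_of_convex (h : IsProxPt f l x p) (hf : EConvexOn f) {y : H}
    {r s : ℝ} (hr : f p = r) (hs : f y = s) {a : ℝ} (ha : 0 < a) (ha1 : a ≤ 1) :
    r + ⟪l⁻¹ • (x - p), y - p⟫ ≤ s + a * (‖y - p‖ ^ 2 / (2 * l)) := by
  have hsegment : r + ‖x - p‖ ^ 2 / (2 * l) ≤
      (1 - a) * r + a * s + ‖x - ((1 - a) • p + a • y)‖ ^ 2 / (2 * l) := by
    have hconv := hf p y (1 - a) a (by linarith) ha.le (by ring)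
    have hle := (h ((1 - a) • p + a • y)).trans (add_le_add_left hconv _)
    rw [hr, hs] at hle
    exact_mod_cast hle
  have hexpand : ‖x - ((1 - a) • p + a • y)‖ ^ 2 / (2 * l) = ‖x - p‖ ^ 2 / (2 * l)
      - a * ⟪l⁻¹ • (x - p), y - p⟫ + a * (a * (‖y - p‖ ^ 2 / (2 * l))) := by
    have hsub : x - ((1 - a) • p + a • y) = (x - p) - a • (y - p) := by module
    rw [hsub, norm_sub_sq_real, real_inner_smul_right, real_inner_smul_left, norm_smul,
      Real.norm_of_nonneg ha.le]
    ring
  refine le_of_mul_le_mul_left ?_ ha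
  linarith

theorem isSubgradientAt (h : IsProxPt f l x p) (hf : EConvexOn f) :
    IsSubgradientAt f (l⁻¹ • (x - p)) p := by
  intro y
  obtain hy | hy := eq_or_ne (f y) ⊤
  · exact hy ▸ le_top
  obtain hp | hp := eq_or_ne (f p) ⊥
  · simp [hp]
  have hfp := (EReal.coe_toReal (h.ne_top hy) hp).symm
  have hfy := (EReal.coe_toReal hy (h.ne_bot hp y)).symm
  have hlim : Tendsto (fun a : ℝ => (f y).toReal + a * (‖y - p‖ ^ 2 / (2 * l))) (𝓝[>] 0)
      (𝓝 ((f y).toReal + 0 * (‖y - p‖ ^ 2 / (2 * l)))) :=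
    ((tendsto_id.mul_const _).const_add _).mono_left nhdsWithin_le_nhds
  have hle := ge_of_tendsto hlim <| by
    filter_upwards [Ioc_mem_nhdsGT zero_lt_one] with a ha
    exact h.add_inner_le_add_mul_of_convex hf hfp hfy ha.1 ha.2
  rw [zero_mul, add_zero] at hle
  rw [hfp, hfy]
  exact_mod_cast hle

end IsProxPt

namespace IsSubgradientAt

variable {f : H → EReal} {g p : H}

theorem coe_le_add_norm_sq_div (hg : IsSubgradientAt f g p) (hbot : f p ≠ ⊥) {l : ℝ} (hl : 0 < l)
    (x y : H) :
    (((f p).toReal + ⟪g, x - p⟫ - l / 2 * ‖g‖ ^ 2 : ℝ) : EReal) ≤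
      f y + ((‖x - y‖ ^ 2 / (2 * l) : ℝ) : EReal) := by
  have hsquare : ⟪g, x - y⟫ - l / 2 * ‖g‖ ^ 2 ≤ ‖x - y‖ ^ 2 / (2 * l) := by
    have hnonneg : 0 ≤ ‖x - y - l • g‖ ^ 2 / (2 * l) := by positivity
    have hexpand : ‖x - y - l • g‖ ^ 2 / (2 * l) =
        ‖x - y‖ ^ 2 / (2 * l) - ⟪g, x - y⟫ + l / 2 * ‖g‖ ^ 2 := by
      rw [norm_sub_sq_real, real_inner_smul_right, real_inner_comm, norm_smul,
        Real.norm_of_nonneg hl.le]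
      field_simp
    linarith
  have hsplit : ⟪g, x - p⟫ = ⟪g, x - y⟫ + ⟪g, y - p⟫ := by
    rw [← inner_add_right, sub_add_sub_cancel]
  calc (((f p).toReal + ⟪g, x - p⟫ - l / 2 * ‖g‖ ^ 2 : ℝ) : EReal)
      ≤ (((f p).toReal + ⟪g, y - p⟫ + ‖x - y‖ ^ 2 / (2 * l) : ℝ) : EReal) := by
        exact_mod_cast (by linarith)
    _ ≤ f p + ((⟪g, y - p⟫ : ℝ) : EReal) + ((‖x - y‖ ^ 2 / (2 * l) : ℝ) : EReal) := by
        push_cast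
        gcongr
        exact EReal.coe_toReal_le hbot
    _ ≤ f y + ((‖x - y‖ ^ 2 / (2 * l) : ℝ) : EReal) := add_le_add_left (hg y) _

theorem coe_moreau (hg : IsSubgradientAt f g p) (hbot : f p ≠ ⊥) (htop : f p ≠ ⊤) {l : ℝ}
    (hl : 0 < l) (x : H) :
    (moreau f l x : EReal) = ⨅ y : H, f y + ((‖x - y‖ ^ 2 / (2 * l) : ℝ) : EReal) := by
  refine EReal.coe_toReal ?_ ?_
  · exact ((iInf_le _ p).trans_lt (EReal.add_lt_top htop (EReal.coe_ne_top _))).ne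
  · exact ((EReal.bot_lt_coe _).trans_le (le_iInf (hg.coe_le_add_norm_sq_div hbot hl x))).ne'

theorem le_moreau (hg : IsSubgradientAt f g p) (hbot : f p ≠ ⊥) (htop : f p ≠ ⊤) {l : ℝ}
    (hl : 0 < l) (x : H) :
    (f p).toReal + ⟪g, x - p⟫ - l / 2 * ‖g‖ ^ 2 ≤ moreau f l x := by
  rw [← EReal.coe_le_coe_iff, hg.coe_moreau hbot htop hl]
  exact le_iInf (hg.coe_le_add_norm_sq_div hbot hl x)

theorem moreau_le (hg : IsSubgradientAt f g p) (hbot : f p ≠ ⊥) (htop : f p ≠ ⊤) {l : ℝ}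
    (hl : 0 < l) (x : H) :
    moreau f l x ≤ (f p).toReal + ‖x - p‖ ^ 2 / (2 * l) := by
  rw [← EReal.coe_le_coe_iff, hg.coe_moreau hbot htop hl, EReal.coe_add,
    EReal.coe_toReal htop hbot]
  exact iInf_le _ p

theorem moreau_sub_le_inner (hg : IsSubgradientAt f g p) (hbot : f p ≠ ⊥) (htop : f p ≠ ⊤) {l : ℝ}
    (hl : 0 < l) {x z : H} (hx : x = p + l • g) (hz : f z ≠ ⊤) :
    moreau f l x - (f z).toReal ≤ ⟪g, x - z⟫ := by
  have hmajorant := hg.moreau_le hbot htop hl x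
  have hsubgrad : (f p).toReal + ⟪g, z - p⟫ ≤ (f z).toReal := by
    have hle := (hg z).trans (EReal.le_coe_toReal hz)
    rw [← EReal.coe_toReal htop hbot] at hle
    exact_mod_cast hle
  have hnorm : ‖x - p‖ ^ 2 / (2 * l) = l / 2 * ‖g‖ ^ 2 := by
    rw [hx, add_sub_cancel_left, norm_smul, Real.norm_of_nonneg hl.le]
    field_simp
  have hinner : ⟪g, x - z⟫ = l * ‖g‖ ^ 2 - ⟪g, z - p⟫ := by
    rw [hx, show p + l • g - z = l • g - (z - p) by abel, inner_sub_right, real_inner_smul_right,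
      real_inner_self_eq_norm_sq]
  have hnonneg : 0 ≤ l * ‖g‖ ^ 2 := by positivity
  linarith

theorem hasDerivAt_moreau (hg : IsSubgradientAt f g p) (hbot : f p ≠ ⊥) (htop : f p ≠ ⊤)
    {lam : ℝ → ℝ} {x : ℝ → H} {t lam' : ℝ} {v : H} (hlam : 0 < lam t)
    (hlam' : HasDerivAt lam lam' t) (hx' : HasDerivAt x v t) (hx : x t = p + lam t • g) :
    HasDerivAt (fun s => moreau f (lam s) (x s)) (⟪g, v⟫ - lam' / 2 * ‖g‖ ^ 2) t := by
  have hxp : x t - p = lam t • g := by rw [hx, add_sub_cancel_left]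
  have hminorant : HasDerivAt
      (fun s => (f p).toReal + ⟪g, x s - p⟫ - lam s / 2 * ‖g‖ ^ 2)
      (⟪g, v⟫ - lam' / 2 * ‖g‖ ^ 2) t := by
    have h := (((hasDerivAt_const t g).inner ℝ (hx'.sub_const p)).const_add (f p).toReal).fun_sub
      ((hlam'.div_const 2).mul_const (‖g‖ ^ 2))
    simpa using h
  have hmajorant : HasDerivAt
      (fun s => (f p).toReal + ‖x s - p‖ ^ 2 / (2 * lam s)) (⟪g, v⟫ - lam' / 2 * ‖g‖ ^ 2) t := by
    have h := ((hx'.sub_const p).norm_sq.fun_div (hlam'.const_mul 2)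
      (by positivity)).const_add (f p).toReal
    refine h.congr_deriv ?_
    rw [hxp, real_inner_smul_left, norm_smul, Real.norm_of_nonneg hlam.le]
    field_simp
  have hpos : ∀ᶠ s in 𝓝 t, 0 < lam s := hlam'.continuousAt.eventually (lt_mem_nhds hlam)
  refine hasDerivAt_iff_hasFDerivAt.2 <| hasFDerivAt_of_eventually_le_of_eventually_le
    hminorant.hasFDerivAt hmajorant.hasFDerivAt
    (hpos.mono fun s hs => hg.le_moreau hbot htop hs (x s))
    (hpos.mono fun s hs => hg.moreau_le hbot htop hs (x s)) ?_
  rw [hxp, real_inner_smul_right, real_inner_self_eq_norm_sq, norm_smul,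
    Real.norm_of_nonneg hlam.le]
  field_simp
  ring

end IsSubgradientAt

/-- The anchored velocity `u(t) = (α - 1) (x(t) - z) + t (ẋ(t) + β(t) G(t))` of the Lyapunov
analysis, where `v` stands for `ẋ`. -/
def anchoredVelocity (α : ℝ) (β : ℝ → ℝ) (x v G : ℝ → H) (z : H) (t : ℝ) : H :=
  (α - 1) • (x t - z) + t • (v t + β t • G t)

/-- The Lyapunov energy `t² w(t) φ(t) + ‖u(t)‖² / 2`, where `φ` is the gap in function values and
`u` is the anchored velocity. -/
def lyapunovEnergy (α : ℝ) (β w φ : ℝ → ℝ) (x v G : ℝ → H) (z : H) (t : ℝ) : ℝ :=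
  t ^ 2 * w t * φ t + ‖anchoredVelocity α β x v G z t‖ ^ 2 / 2

theorem hasDerivAt_anchoredVelocity {α t b β' : ℝ} {β : ℝ → ℝ} {x v G : ℝ → H} {acc G' : H}
    (z : H) (ht : t ≠ 0) (hβ' : HasDerivAt β β' t) (hx : HasDerivAt x (v t) t)
    (hv : HasDerivAt v acc t) (hG' : HasDerivAt G G' t)
    (hode : acc + (α / t) • v t + β t • G' + b • G t = 0) :
    HasDerivAt (anchoredVelocity α β x v G z) (-(t * (b - β' - β t / t)) • G t) t := by
  have hderiv := ((hx.sub_const z).const_smul (α - 1)).add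
    ((hasDerivAt_id t).smul (hv.add (hβ'.smul hG')))
  refine hderiv.congr_deriv ?_
  have hacc : acc = -((α / t) • v t + β t • G' + b • G t) := by
    rw [eq_neg_iff_add_eq_zero, ← hode]
    abel
  simp only [id, Pi.add_apply, Pi.smul_apply', hacc]
  match_scalars <;> field_simp <;> ring

theorem hasDerivAt_lyapunovEnergy {α t w' φ' : ℝ} {β w φ : ℝ → ℝ} {x v G : ℝ → H} {z u' : H}
    (hw' : HasDerivAt w w' t) (hφ' : HasDerivAt φ φ' t)
    (hu' : HasDerivAt (anchoredVelocity α β x v G z) u' t) :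
    HasDerivAt (lyapunovEnergy α β w φ x v G z)
      ((2 * t * w t + t ^ 2 * w') * φ t + t ^ 2 * w t * φ'
        + ⟪anchoredVelocity α β x v G z t, u'⟫) t := by
  have hderiv := (((hasDerivAt_pow 2 t).mul hw').mul hφ').add (hu'.norm_sq.div_const 2)
  refine hderiv.congr_deriv ?_
  simp

theorem dissipation_rate_nonpos {α t w w' β φ φ' : ℝ} {e v g : H} (ht : 0 ≤ t) (hα : 1 ≤ α)
    (hβ : 0 ≤ β) (hw : 0 ≤ w) (hφ : 0 ≤ φ) (hw' : 0 ≤ (α - 3) * w - t * w')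
    (hφe : φ ≤ ⟪g, e⟫) (hφ' : φ' ≤ ⟪g, v⟫) :
    (2 * t * w + t ^ 2 * w') * φ + t ^ 2 * w * φ'
      + ⟪(α - 1) • e + t • (v + β • g), -(t * w) • g⟫ ≤ 0 := by
  have hinner : ⟪(α - 1) • e + t • (v + β • g), -(t * w) • g⟫ =
      -(t * w) * ((α - 1) * ⟪g, e⟫ + t * (⟪g, v⟫ + β * ‖g‖ ^ 2)) := by
    rw [real_inner_comm]
    simp only [real_inner_smul_left, real_inner_smul_right, inner_add_right,
      real_inner_self_eq_norm_sq]
    ring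
  have hweight : 0 ≤ t * ((α - 3) * w - t * w') * φ := by positivity
  have hsubgrad : 0 ≤ t * w * (α - 1) * (⟪g, e⟫ - φ) :=
    mul_nonneg (mul_nonneg (by positivity) (by linarith)) (by linarith)
  have hgap_nonneg : 0 ≤ t ^ 2 * w * (⟪g, v⟫ - φ') := mul_nonneg (by positivity) (by linarith)
  have hdamping : 0 ≤ t ^ 2 * w * β * ‖g‖ ^ 2 := by positivity
  rw [hinner]
  linarith

theorem antitoneOn_lyapunovEnergy {t₀ α : ℝ} {β β' b w w' φ φ' : ℝ → ℝ}
    {x v acc G G' : ℝ → H} {z : H} (ht₀ : 0 < t₀) (hα : 1 ≤ α)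
    (hβ : ∀ t ≥ t₀, 0 ≤ β t) (hβ' : ∀ t ≥ t₀, HasDerivAt β (β' t) t)
    (hwb : ∀ t ≥ t₀, w t = b t - β' t - β t / t) (hw : ∀ t ≥ t₀, 0 ≤ w t)
    (hw' : ∀ t ≥ t₀, HasDerivAt w (w' t) t)
    (hww' : ∀ t ≥ t₀, 0 ≤ (α - 3) * w t - t * w' t)
    (hx : ∀ t ≥ t₀, HasDerivAt x (v t) t) (hv : ∀ t ≥ t₀, HasDerivAt v (acc t) t)
    (hG' : ∀ t ≥ t₀, HasDerivAt G (G' t) t)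
    (hode : ∀ t ≥ t₀, acc t + (α / t) • v t + β t • G' t + b t • G t = 0)
    (hφ : ∀ t ≥ t₀, 0 ≤ φ t) (hφx : ∀ t ≥ t₀, φ t ≤ ⟪G t, x t - z⟫)
    (hφ' : ∀ t ≥ t₀, HasDerivAt φ (φ' t) t) (hφv : ∀ t ≥ t₀, φ' t ≤ ⟪G t, v t⟫) :
    AntitoneOn (lyapunovEnergy α β w φ x v G z) (Ici t₀) := by
  have hpos : ∀ t ≥ t₀, 0 < t := fun t ht => ht₀.trans_le ht
  have hderiv : ∀ t ≥ t₀, HasDerivAt (lyapunovEnergy α β w φ x v G z)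
      ((2 * t * w t + t ^ 2 * w' t) * φ t + t ^ 2 * w t * φ' t
        + ⟪anchoredVelocity α β x v G z t, -(t * w t) • G t⟫) t := fun t ht =>
    hasDerivAt_lyapunovEnergy (hw' t ht) (hφ' t ht) <| hwb t ht ▸
      hasDerivAt_anchoredVelocity z (hpos t ht).ne' (hβ' t ht) (hx t ht) (hv t ht) (hG' t ht)
        (hode t ht)
  refine antitoneOn_of_hasDerivWithinAt_nonpos (convex_Ici t₀)
    (fun t ht => (hderiv t ht).continuousAt.continuousWithinAt)
    (fun t ht => (hderiv t (interior_subset ht)).hasDerivWithinAt) fun t ht => ?_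
  have ht : t ≥ t₀ := interior_subset ht
  exact dissipation_rate_nonpos (hpos t ht).le hα (hβ t ht) (hw t ht) (hφ t ht) (hww' t ht)
    (hφx t ht) (hφv t ht)

theorem sq_mul_mul_le_lyapunovEnergy (α : ℝ) (β w φ : ℝ → ℝ) (x v G : ℝ → H) (z : H) (t : ℝ) :
    t ^ 2 * w t * φ t ≤ lyapunovEnergy α β w φ x v G z t :=
  le_add_of_nonneg_right (by positivity)

theorem tendsto_mul_mul_zero_of_sq_mul_mul_le {β w φ : ℝ → ℝ} {C : ℝ}
    (hβ : ∀ᶠ t in atTop, 0 ≤ β t) (hw : ∀ᶠ t in atTop, 0 < w t) (hφ : ∀ᶠ t in atTop, 0 ≤ φ t)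
    (hC : ∀ᶠ t in atTop, t ^ 2 * w t * φ t ≤ C)
    (hβw : Tendsto (fun t => β t / (t * w t)) atTop (𝓝 0)) :
    Tendsto (fun t => t * β t * φ t) atTop (𝓝 0) := by
  have hlim : Tendsto (fun t => β t / (t * w t) * C) atTop (𝓝 0) := by
    simpa only [zero_mul] using hβw.mul_const C
  refine squeeze_zero' ?_ ?_ hlim
  · filter_upwards [hβ, hφ, eventually_ge_atTop 0] with t hβt hφt ht
    positivity
  · filter_upwards [hβ, hw, hC, eventually_gt_atTop 0] with t hβt hwt hCt ht
    calc t * β t * φ t = β t / (t * w t) * (t ^ 2 * w t * φ t) := by field_simp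
      _ ≤ β t / (t * w t) * C := by gcongr

end

theorem beta_weighted_moreau_values_tendsto_zero_general
    {H : Type*} [NormedAddCommGroup H] [InnerProductSpace ℝ H]
    (Φ : H → EReal)
    (hΦbot : ∀ y, Φ y ≠ ⊥) (hΦproper : ∃ y, Φ y ≠ ⊤)
    (hΦconv : EConvexOn Φ)
    (t₀ α : ℝ) (ht₀ : 0 < t₀)
    (β b lam β' lam' w' : ℝ → ℝ)
    (hβnonneg : ∀ t ≥ t₀, 0 ≤ β t)
    (hlampos : ∀ t ≥ t₀, 0 < lam t)
    (hβ' : ∀ t ≥ t₀, HasDerivAt β (β' t) t)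
    (hlam' : ∀ t ≥ t₀, HasDerivAt lam (lam' t) t)
    (hw' : ∀ t ≥ t₀, HasDerivAt (fun s => b s - β' s - β s / s) (w' t) t)
    (x v acc p G' : ℝ → H)
    (hx : ∀ t ≥ t₀, HasDerivAt x (v t) t)
    (hv : ∀ t ≥ t₀, HasDerivAt v (acc t) t)
    (hp : ∀ t ≥ t₀, IsProxPt Φ (lam t) (x t) (p t))
    (hG' : ∀ t ≥ t₀, HasDerivAt (fun s => (lam s)⁻¹ • (x s - p s)) (G' t) t)
    (hode : ∀ t ≥ t₀, acc t + (α / t) • v t + β t • G' t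
        + b t • ((lam t)⁻¹ • (x t - p t)) = 0)
    (hα : 1 ≤ α)
    (hlammono : MonotoneOn lam (Set.Ici t₀))
    (hw : ∀ t ≥ t₀, β' t + β t / t < b t)
    (hAs1 : ∀ t ≥ t₀, 0 ≤ (α - 3) * (b t - β' t - β t / t) - t * w' t)
    (hβw : Filter.Tendsto (fun t => β t / (t * (b t - β' t - β t / t)))
      Filter.atTop (nhds 0))
    (z : H) (hz : ∀ y, Φ z ≤ Φ y) :
    Filter.Tendsto (fun t => t * β t * (moreau Φ (lam t) (x t) - (Φ z).toReal))
      Filter.atTop (nhds 0) := by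
  have hztop : Φ z ≠ ⊤ := hΦproper.elim fun y hy => ((hz y).trans_lt hy.lt_top).ne
  have hptop : ∀ t ≥ t₀, Φ (p t) ≠ ⊤ := fun t ht => (hp t ht).ne_top hztop
  have hsubgrad : ∀ t ≥ t₀, IsSubgradientAt Φ ((lam t)⁻¹ • (x t - p t)) (p t) :=
    fun t ht => (hp t ht).isSubgradientAt hΦconv
  have hxp : ∀ t ≥ t₀, x t = p t + lam t • (lam t)⁻¹ • (x t - p t) := fun t ht => by
    rw [smul_inv_smul₀ (hlampos t ht).ne', add_sub_cancel]
  have hgap_nonneg : ∀ t ≥ t₀, 0 ≤ moreau Φ (lam t) (x t) - (Φ z).toReal := fun t ht => by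
    simpa using (isSubgradientAt_zero_of_forall_le hz).le_moreau (hΦbot z) hztop (hlampos t ht)
      (x t)
  have hlam'nonneg : ∀ t ≥ t₀, 0 ≤ lam' t := fun t ht =>
    (hlam' t ht).hasDerivWithinAt.nonneg_of_monotoneOn
      (uniqueDiffWithinAt_iff_accPt.1 (uniqueDiffOn_Ici t₀ t ht)) hlammono
  have hwpos : ∀ t ≥ t₀, 0 < b t - β' t - β t / t := fun t ht => by linarith [hw t ht]
  have hgap_le : ∀ t ≥ t₀, moreau Φ (lam t) (x t) - (Φ z).toReal ≤
      inner ℝ ((lam t)⁻¹ • (x t - p t)) (x t - z) := fun t ht =>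
    (hsubgrad t ht).moreau_sub_le_inner (hΦbot _) (hptop t ht) (hlampos t ht) (hxp t ht) hztop
  have hgap_deriv := fun t ht => ((hsubgrad t ht).hasDerivAt_moreau (hΦbot _) (hptop t ht)
    (hlampos t ht) (hlam' t ht) (hx t ht) (hxp t ht)).sub_const (Φ z).toReal
  have hanti := antitoneOn_lyapunovEnergy ht₀ hα hβnonneg hβ' (fun _ _ => rfl)
    (fun t ht => (hwpos t ht).le) hw' hAs1 hx hv hG' hode hgap_nonneg hgap_le hgap_deriv fun t ht =>
      sub_le_self _ (mul_nonneg (div_nonneg (hlam'nonneg t ht) zero_le_two) (sq_nonneg _))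
  have hlarge := eventually_ge_atTop t₀
  exact tendsto_mul_mul_zero_of_sq_mul_mul_le (hlarge.mono hβnonneg) (hlarge.mono hwpos)
    (hlarge.mono hgap_nonneg) (hlarge.mono fun t ht =>
      (sq_mul_mul_le_lyapunovEnergy ..).trans (hanti self_mem_Ici ht ht)) hβw

theorem beta_weighted_moreau_values_tendsto_zero
    {H : Type*} [NormedAddCommGroup H] [InnerProductSpace ℝ H] [CompleteSpace H]
    (Φ : H → EReal)
    (hΦbot : ∀ y, Φ y ≠ ⊥) (hΦproper : ∃ y, Φ y ≠ ⊤)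
    (hΦconv : EConvexOn Φ) (hΦlsc : LowerSemicontinuous Φ)
    (t₀ α : ℝ) (ht₀ : 0 < t₀)
    (β b lam β' b' lam' w' : ℝ → ℝ)
    (hβnonneg : ∀ t ≥ t₀, 0 ≤ β t)
    (hbpos : ∀ t ≥ t₀, 0 < b t)
    (hlampos : ∀ t ≥ t₀, 0 < lam t)
    (hβ' : ∀ t ≥ t₀, HasDerivAt β (β' t) t)
    (hb' : ∀ t ≥ t₀, HasDerivAt b (b' t) t)
    (hlam' : ∀ t ≥ t₀, HasDerivAt lam (lam' t) t)
    (hw' : ∀ t ≥ t₀, HasDerivAt (fun s => b s - β' s - β s / s) (w' t) t)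
    (x v acc p G' : ℝ → H)
    (hx : ∀ t ≥ t₀, HasDerivAt x (v t) t)
    (hv : ∀ t ≥ t₀, HasDerivAt v (acc t) t)
    (hp : ∀ t ≥ t₀, IsProxPt Φ (lam t) (x t) (p t))
    (hG' : ∀ t ≥ t₀, HasDerivAt (fun s => (lam s)⁻¹ • (x s - p s)) (G' t) t)
    (hode : ∀ t ≥ t₀, acc t + (α / t) • v t + β t • G' t
        + b t • ((lam t)⁻¹ • (x t - p t)) = 0)
    (hα : 1 ≤ α)
    (hlammono : MonotoneOn lam (Set.Ici t₀))
    (hw : ∀ t ≥ t₀, β' t + β t / t < b t)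
    (hAs1 : ∀ t ≥ t₀, 0 ≤ (α - 3) * (b t - β' t - β t / t) - t * w' t)
    (hβw : Filter.Tendsto (fun t => β t / (t * (b t - β' t - β t / t)))
      Filter.atTop (nhds 0))
    (z : H) (hz : ∀ y, Φ z ≤ Φ y)
    :
    Filter.Tendsto (fun t => t * β t * (moreau Φ (lam t) (x t) - (Φ z).toReal))
      Filter.atTop (nhds 0) :=
  beta_weighted_moreau_values_tendsto_zero_general Φ hΦbot hΦproper hΦconv t₀ α ht₀ β b lam β' lam'
    w' hβnonneg hlampos hβ' hlam' hw' x v acc p G' hx hv hp hG' hode hα hlammono hw hAs1 hβw z hz
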